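/- Let s ∈ (0,1), u ∈ C_c^∞(ℝⁿ), and let U be its Caffarelli–Silvestre extension. Then ∫₀^∞∫_{ℝⁿ} z^{1−2s} |∇_x ∂_z U(x,z)|² dx dz < ∞. -/

import Mathlib

open MeasureTheory Filter Set
open scoped Topology ENNReal NNReal

noncomputable section

/-- `ℝⁿ` with the Euclidean norm. -/
abbrev En (n : ℕ) := EuclideanSpace ℝ (Fin n)

/-- The normalizing constant `p(n,s) = Γ(n/2+s)/(π^{n/2} Γ(s))` of the Poisson kernel. -/
def pns (n : ℕ) (s : ℝ) : ℝ :=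
  Real.Gamma ((n : ℝ) / 2 + s) / (Real.pi ^ ((n : ℝ) / 2) * Real.Gamma s)

/-- The fractional Poisson kernel `P_z^{(s)}(x) = p(n,s) z^{2s} (|x|² + z²)^{-(n+2s)/2}`. -/
def Pker (n : ℕ) (s z : ℝ) (x : En n) : ℝ :=
  pns n s * z ^ (2 * s) * (‖x‖ ^ 2 + z ^ 2) ^ (-((n : ℝ) + 2 * s) / 2)

/-- Convolution with the fractional Poisson kernel in the first variable, at fixed `z`. -/
def Pconv (n : ℕ) (s z : ℝ) (f : En n → ℝ) (x : En n) : ℝ :=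
  ∫ y, Pker n s z (x - y) * f y

/-- The Caffarelli–Silvestre extension `U(x,z) = (P_z^{(s)} ∗ u)(x)`. -/
def CSext (n : ℕ) (s : ℝ) (u : En n → ℝ) (x : En n) (z : ℝ) : ℝ :=
  Pconv n s z u x

/-- The constant `C(n,s) = 4^s Γ(n/2+s) / (π^{n/2} |Γ(-s)|)`. -/
def Cns (n : ℕ) (s : ℝ) : ℝ :=
  4 ^ s * Real.Gamma ((n : ℝ) / 2 + s) / (Real.pi ^ ((n : ℝ) / 2) * |Real.Gamma (-s)|)

/-- The fractional Laplacian `(-Δ)^s w(x)` as a principal-value singular integral. -/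
def fracLap (n : ℕ) (s : ℝ) (w : En n → ℝ) (x : En n) : ℝ :=
  Cns n s * limUnder (𝓝[>] (0 : ℝ))
    (fun ε : ℝ => ∫ y in {y : En n | ε < ‖x - y‖}, (w x - w y) / ‖x - y‖ ^ ((n : ℝ) + 2 * s))

/-- `Λ^s w := -(-Δ)^s w`. -/
def Lam (n : ℕ) (s : ℝ) (w : En n → ℝ) (x : En n) : ℝ := - fracLap n s w x

/-- The first-order carré du champ `Γ₁(u,v) = ½(Λ^s(uv) - u Λ^s v - v Λ^s u)`. -/
def Gamma1 (n : ℕ) (s : ℝ) (u v : En n → ℝ) (x : En n) : ℝ :=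
  (Lam n s (fun y => u y * v y) x - u x * Lam n s v x - v x * Lam n s u x) / 2

/-- The constant `β_s = 2^{2s-1} Γ(s)/Γ(1-s)`. -/
def betaS (s : ℝ) : ℝ := 2 ^ (2 * s - 1) * Real.Gamma s / Real.Gamma (1 - s)

/-- Partial derivative in the `i`-th coordinate direction. -/
def pd {n : ℕ} (i : Fin n) (f : En n → ℝ) (x : En n) : ℝ :=
  fderiv ℝ f x (EuclideanSpace.single i 1)

/-- The Laplacian in the `x`-variables. -/
def lapX {n : ℕ} (f : En n → ℝ) (x : En n) : ℝ := ∑ i, pd i (pd i f) x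

/-- The degenerate operator `L_s W = div_{x,z}(z^{1-2s} ∇̃W)`, written out as
`z^{1-2s} Δ_x W + ∂_z(z^{1-2s} ∂_z W)`. -/
def LsOp {n : ℕ} (s : ℝ) (W : En n → ℝ → ℝ) (x : En n) (z : ℝ) : ℝ :=
  z ^ (1 - 2 * s) * lapX (fun y => W y z) x
    + deriv (fun t => t ^ (1 - 2 * s) * deriv (W x) t) z

/-!
The kernel `∂_z P_z` has mean zero and satisfies `|∂_z P_z| ≤ (n + 2s) P_z / z`. Hence, with
`f = ∂_i u`,
`∂_i ∂_z U(x, z) = ∫ ∂_z P_z(t) (f(x - t) - f(x)) dt`,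
and if `f` is `b`-Hölder with `b < 2s`, the scaling `P_z(x) = z⁻ⁿ P_1(x / z)` bounds both the sup
norm and the `L¹` norm of this function of `x` by a multiple of `z^{b-1}`; for the `L¹` norm one
uses that the integrand vanishes unless `x` or `x - t` lies in the support of `f`. Its squared
`L²` norm is therefore `O(z^{2b-2})`, and the weighted energy at height `z` is `O(z^{2b-2s-1})`.
This is integrable at `0` if `b > s`, and at `∞` if `b = 0`; a bounded Hölder function allows both.
-/

open scoped Convolution

section DifferenceConvolution

variable {G F : Type*} [NormedAddCommGroup F]

lemma enorm_sub_le_mul_indicator_support {f : G → F} {x y : G} {w : ℝ≥0∞}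
    (hw : ‖f y - f x‖ₑ ≤ w) :
    ‖f y - f x‖ₑ ≤ w * (f.support.indicator 1 x + f.support.indicator 1 y) := by
  by_cases hx : f x = 0 <;> by_cases hy : f y = 0
  · simp [hx, hy]
  all_goals
    refine hw.trans (le_mul_of_one_le_right' ?_)
    simp [indicator, hx, hy]

variable [MeasurableSpace G] [AddGroup G] [MeasurableAdd₂ G] [MeasurableNeg G]
  {μ : Measure G}

lemma aemeasurable_mul_indicator_add_indicator_sub {k : G → ℝ≥0∞} (hk : AEMeasurable k μ)
    {S : Set G} (hS : MeasurableSet S) :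
    AEMeasurable (fun p : G × G => k p.2 * (S.indicator 1 p.1 + S.indicator 1 (p.1 - p.2)))
      (μ.prod μ) := by
  have : Measurable (S.indicator (1 : G → ℝ≥0∞)) := measurable_one.indicator hS
  exact hk.comp_snd.mul (by fun_prop)

variable [SFinite μ] [μ.IsAddRightInvariant]

lemma lintegral_lintegral_mul_indicator_add_indicator_sub {k : G → ℝ≥0∞} (hk : AEMeasurable k μ)
    {S : Set G} (hS : MeasurableSet S) :
    ∫⁻ x, ∫⁻ t, k t * (S.indicator 1 x + S.indicator 1 (x - t)) ∂μ ∂μ =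
      2 * μ S * ∫⁻ t, k t ∂μ := by
  have hind : Measurable (S.indicator (1 : G → ℝ≥0∞)) := measurable_one.indicator hS
  have hinner (t : G) : ∫⁻ x, k t * (S.indicator 1 x + S.indicator 1 (x - t)) ∂μ =
      k t * (2 * μ S) := by
    rw [lintegral_const_mul _ (by fun_prop), lintegral_add_left hind,
      lintegral_sub_right_eq_self (S.indicator 1) t, lintegral_indicator_one hS, two_mul]
  rw [lintegral_lintegral_swap (aemeasurable_mul_indicator_add_indicator_sub hk hS)]
  simp_rw [hinner]
  rw [lintegral_mul_const'' _ hk, mul_comm]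

lemma lintegral_enorm_sq_integral_smul_sub_le [NormedSpace ℝ F] {K : G → ℝ}
    (hK : AEMeasurable K μ) {f : G → F} (hf : MeasurableSet f.support)
    {ω : G → ℝ≥0∞} (hω : AEMeasurable ω μ) (hfω : ∀ x t, ‖f (x - t) - f x‖ₑ ≤ ω t) :
    ∫⁻ x, ‖∫ t, K t • (f (x - t) - f x) ∂μ‖ₑ ^ 2 ∂μ ≤
      2 * μ f.support * (∫⁻ t, ‖K t‖ₑ * ω t ∂μ) ^ 2 := by
  have hk : AEMeasurable (fun t => ‖K t‖ₑ * ω t) μ := hK.enorm.mul hω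
  have hsup (x : G) : ‖∫ t, K t • (f (x - t) - f x) ∂μ‖ₑ ≤ ∫⁻ t, ‖K t‖ₑ * ω t ∂μ := by
    refine (enorm_integral_le_lintegral_enorm _).trans (lintegral_mono fun t => ?_)
    rw [enorm_smul]
    gcongr
    exact hfω x t
  have hloc (x : G) : ‖∫ t, K t • (f (x - t) - f x) ∂μ‖ₑ ≤ ∫⁻ t, ‖K t‖ₑ * ω t *
      (f.support.indicator 1 x + f.support.indicator 1 (x - t)) ∂μ :=
    (enorm_integral_le_lintegral_enorm _).trans
      (lintegral_mono fun t => by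
        rw [enorm_smul, mul_assoc]
        gcongr
        exact enorm_sub_le_mul_indicator_support (hfω x t))
  calc ∫⁻ x, ‖∫ t, K t • (f (x - t) - f x) ∂μ‖ₑ ^ 2 ∂μ
    _ ≤ ∫⁻ x, (∫⁻ t, ‖K t‖ₑ * ω t ∂μ) * ∫⁻ t, ‖K t‖ₑ * ω t *
          (f.support.indicator 1 x + f.support.indicator 1 (x - t)) ∂μ ∂μ := by
      refine lintegral_mono fun x => ?_
      rw [sq]
      exact mul_le_mul' (hsup x) (hloc x)
    _ = (∫⁻ t, ‖K t‖ₑ * ω t ∂μ) * (2 * μ f.support * ∫⁻ t, ‖K t‖ₑ * ω t ∂μ) := by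
      rw [lintegral_const_mul''
          _ (aemeasurable_mul_indicator_add_indicator_sub hk hf).lintegral_prod_right',
        lintegral_lintegral_mul_indicator_add_indicator_sub hk hf]
    _ = 2 * μ f.support * (∫⁻ t, ‖K t‖ₑ * ω t ∂μ) ^ 2 := by ring

end DifferenceConvolution

lemma exists_holderWith_of_le_of_bounded {X E : Type*} [PseudoEMetricSpace X]
    [SeminormedAddCommGroup E] {f : X → E} {C a b : ℝ≥0} (hf : HolderWith C a f) {A : ℝ}
    (hA : ∀ x, ‖f x‖ ≤ A) (hba : b ≤ a) : ∃ C' : ℝ≥0, HolderWith C' b f := by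
  have hf₀ : HolderWith (2 * A).toNNReal 0 f := fun x y => by
    rw [NNReal.coe_zero, ENNReal.rpow_zero, mul_one, edist_dist]
    refine ENNReal.ofReal_le_ofReal ((dist_le_norm_add_norm _ _).trans ?_)
    linarith [hA x, hA y]
  exact ⟨_, hf₀.of_le_of_le hf zero_le hba⟩

lemma setLIntegral_Ioi_lt_top_of_le_rpow {g : ℝ → ℝ≥0∞} {C D : ℝ≥0∞} {p q : ℝ} (hC : C ≠ ⊤)
    (hD : D ≠ ⊤) (hp : -1 < p) (hq : q < -1)
    (hgp : ∀ z ∈ Ioc 0 1, g z ≤ C * ENNReal.ofReal (z ^ p))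
    (hgq : ∀ z ∈ Ioi 1, g z ≤ D * ENNReal.ofReal (z ^ q)) :
    ∫⁻ z in Ioi 0, g z < ⊤ := by
  have hsmall : IntegrableOn (fun z : ℝ => z ^ p) (Ioc 0 1) :=
    (intervalIntegrable_iff_integrableOn_Ioc_of_le zero_le_one).1
      (intervalIntegral.intervalIntegrable_rpow' hp)
  have hlarge : IntegrableOn (fun z : ℝ => z ^ q) (Ioi 1) :=
    integrableOn_Ioi_rpow_of_lt hq zero_lt_one
  rw [← Ioc_union_Ioi_eq_Ioi (zero_le_one' ℝ)]
  refine (lintegral_union_le _ _ _).trans_lt (ENNReal.add_lt_top.2 ⟨?_, ?_⟩)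
  · refine (setLIntegral_mono' measurableSet_Ioc hgp).trans_lt ?_
    rw [lintegral_const_mul' _ _ hC]
    exact ENNReal.mul_lt_top hC.lt_top hsmall.lintegral_lt_top
  · refine (setLIntegral_mono' measurableSet_Ioi hgq).trans_lt ?_
    rw [lintegral_const_mul' _ _ hD]
    exact ENNReal.mul_lt_top hD.lt_top hlarge.lintegral_lt_top

section PartialDerivative

variable {n : ℕ} {u : En n → ℝ}

lemma continuous_pd (hu : ContDiff ℝ 1 u) (i : Fin n) : Continuous (pd i u) :=
  (hu.continuous_fderiv one_ne_zero).clm_apply continuous_const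

lemma measurable_pd (i : Fin n) (f : En n → ℝ) : Measurable (pd i f) :=
  measurable_fderiv_apply_const ℝ f _

lemma hasCompactSupport_pd (huc : HasCompactSupport u) (i : Fin n) : HasCompactSupport (pd i u) :=
  huc.fderiv_apply ℝ _

lemma holderWith_pd {C a : ℝ≥0} (hu : HolderWith C a (fderiv ℝ u)) (i : Fin n) :
    HolderWith C a (pd i u) := fun x y => by
  refine le_trans ?_ (hu x y)
  rw [edist_eq_enorm_sub, edist_eq_enorm_sub, pd, pd, ← sub_apply]
  simpa [enorm_eq_nnnorm] using
    (fderiv ℝ u x - fderiv ℝ u y).le_opENorm (EuclideanSpace.single i 1)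

lemma pd_convolution {K : En n → ℝ} (hK : LocallyIntegrable K) (hu : ContDiff ℝ 1 u)
    (huc : HasCompactSupport u) (i : Fin n) (x : En n) :
    pd i (K ⋆[ContinuousLinearMap.lsmul ℝ ℝ, volume] u) x = ∫ t, K t * pd i u (x - t) := by
  rw [pd, (huc.hasFDerivAt_convolution_right (.lsmul ℝ ℝ) hK hu x).fderiv,
    convolution_precompR_apply _ hK (huc.fderiv ℝ) (hu.continuous_fderiv one_ne_zero)]
  rfl

end PartialDerivative

section PoissonKernel

variable {n : ℕ} {s z : ℝ}

lemma pns_nonneg (n : ℕ) (hs : 0 ≤ s) : 0 ≤ pns n s := by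
  have := Real.Gamma_nonneg_of_nonneg hs
  have := Real.Gamma_nonneg_of_nonneg (by positivity : 0 ≤ (n : ℝ) / 2 + s)
  unfold pns
  positivity

lemma Pker_nonneg (hs : 0 ≤ s) (hz : 0 ≤ z) (x : En n) : 0 ≤ Pker n s z x := by
  have := pns_nonneg n hs
  unfold Pker
  positivity

lemma continuous_Pker (s : ℝ) (hz : 0 < z) : Continuous (Pker n s z) := by
  have hpos (x : En n) : ‖x‖ ^ 2 + z ^ 2 ≠ 0 := by positivity
  exact continuous_const.mul
    (Continuous.rpow_const (by fun_prop) fun x => Or.inl (hpos x))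

lemma Pker_eq_one_inv_smul (s : ℝ) (hz : 0 < z) (x : En n) :
    Pker n s z x = z ^ (-(n : ℝ)) * Pker n s 1 (z⁻¹ • x) := by
  have hscale : ‖x‖ ^ 2 + z ^ 2 = z ^ (2 : ℝ) * (‖z⁻¹ • x‖ ^ 2 + 1 ^ 2) := by
    rw [norm_smul, norm_inv, Real.norm_of_nonneg hz.le, Real.rpow_two]
    field_simp
  have hpow : z ^ (2 * s) * (z ^ (2 : ℝ)) ^ (-((n : ℝ) + 2 * s) / 2) = z ^ (-(n : ℝ)) := by
    rw [← Real.rpow_mul hz.le, ← Real.rpow_add hz]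
    ring_nf
  rw [Pker, Pker, hscale, Real.mul_rpow (by positivity) (by positivity), Real.one_rpow, ← hpow]
  ring

lemma Pker_le_rpow_mul_Pker (hs : 0 ≤ s) {w : ℝ} (hw : 0 < w) (hwz : w ≤ z) (x : En n) :
    Pker n s z x ≤ (z / w) ^ (2 * s) * Pker n s w x := by
  have hz : 0 < z := hw.trans_le hwz
  have hp := pns_nonneg n hs
  have hbase : (‖x‖ ^ 2 + z ^ 2) ^ (-((n : ℝ) + 2 * s) / 2) ≤
      (‖x‖ ^ 2 + w ^ 2) ^ (-((n : ℝ) + 2 * s) / 2) := by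
    refine Real.rpow_le_rpow_of_nonpos (by positivity) (by gcongr) ?_
    have : 0 ≤ (n : ℝ) + 2 * s := by positivity
    linarith
  have hpow : (z / w) ^ (2 * s) * w ^ (2 * s) = z ^ (2 * s) := by
    rw [← Real.mul_rpow (by positivity) hw.le, div_mul_cancel₀ _ hw.ne']
  calc Pker n s z x
    _ ≤ pns n s * z ^ (2 * s) * (‖x‖ ^ 2 + w ^ 2) ^ (-((n : ℝ) + 2 * s) / 2) := by
      unfold Pker
      gcongr
    _ = (z / w) ^ (2 * s) * Pker n s w x := by
      rw [Pker, ← hpow]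
      ring

lemma Pker_mul_norm_rpow (s a : ℝ) (hz : 0 < z) (x : En n) :
    Pker n s z x * ‖x‖ ^ a =
      z ^ (a - n) * (Pker n s 1 (z⁻¹ • x) * ‖z⁻¹ • x‖ ^ a) := by
  have hnorm : ‖x‖ ^ a = z ^ a * ‖z⁻¹ • x‖ ^ a := by
    rw [← Real.mul_rpow hz.le (norm_nonneg _), norm_smul, norm_inv, Real.norm_of_nonneg hz.le,
      mul_inv_cancel_left₀ hz.ne']
  rw [Pker_eq_one_inv_smul s hz, hnorm, sub_eq_add_neg, Real.rpow_add hz]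
  ring

lemma integral_Pker_mul_norm_rpow (s a : ℝ) (hz : 0 < z) :
    ∫ x : En n, Pker n s z x * ‖x‖ ^ a = z ^ a * ∫ x : En n, Pker n s 1 x * ‖x‖ ^ a := by
  simp_rw [Pker_mul_norm_rpow s a hz]
  rw [integral_const_mul, Measure.integral_comp_inv_smul_of_nonneg volume
    (fun x : En n => Pker n s 1 x * ‖x‖ ^ a) hz.le, finrank_euclideanSpace_fin, smul_eq_mul,
    ← mul_assoc, ← Real.rpow_natCast, ← Real.rpow_add hz, sub_add_cancel]

lemma Pker_one_mul_norm_rpow_le (hs : 0 ≤ s) {a : ℝ} (ha : 0 ≤ a) (x : En n) :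
    Pker n s 1 x * ‖x‖ ^ a ≤ pns n s * (1 + ‖x‖ ^ 2) ^ (-((n : ℝ) + 2 * s - a) / 2) := by
  have hp := pns_nonneg n hs
  have hnorm : ‖x‖ ^ a ≤ (1 + ‖x‖ ^ 2) ^ (a / 2) := by
    calc ‖x‖ ^ a = (‖x‖ ^ 2) ^ (a / 2) := by
          rw [← Real.rpow_natCast_mul (norm_nonneg x), Nat.cast_ofNat,
            mul_div_cancel₀ a two_ne_zero]
      _ ≤ (1 + ‖x‖ ^ 2) ^ (a / 2) := by
          gcongr
          exact le_add_of_nonneg_left zero_le_one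
  calc Pker n s 1 x * ‖x‖ ^ a
    _ = pns n s * (1 + ‖x‖ ^ 2) ^ (-((n : ℝ) + 2 * s) / 2) * ‖x‖ ^ a := by
      rw [Pker, Real.one_rpow, mul_one, one_pow, add_comm (‖x‖ ^ 2)]
    _ ≤ pns n s * (1 + ‖x‖ ^ 2) ^ (-((n : ℝ) + 2 * s) / 2) * (1 + ‖x‖ ^ 2) ^ (a / 2) := by
      gcongr
    _ = pns n s * (1 + ‖x‖ ^ 2) ^ (-((n : ℝ) + 2 * s - a) / 2) := by
      rw [mul_assoc, ← Real.rpow_add (by positivity)]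
      ring_nf

lemma integrable_Pker_mul_norm_rpow (hs : 0 ≤ s) (hz : 0 < z) {a : ℝ} (ha₀ : 0 ≤ a)
    (ha : a < 2 * s) : Integrable fun x : En n => Pker n s z x * ‖x‖ ^ a := by
  have hcont : Continuous fun x : En n => Pker n s 1 x * ‖x‖ ^ a :=
    (continuous_Pker s one_pos).mul (continuous_norm.rpow_const fun _ => Or.inr ha₀)
  have hdom : Integrable fun x : En n => (1 + ‖x‖ ^ 2) ^ (-((n : ℝ) + 2 * s - a) / 2) :=
    integrable_rpow_neg_one_add_norm_sq (by rw [finrank_euclideanSpace_fin]; linarith)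
  have hone : Integrable fun x : En n => Pker n s 1 x * ‖x‖ ^ a := by
    refine (hdom.const_mul (pns n s)).mono' hcont.aestronglyMeasurable (.of_forall fun x => ?_)
    rw [Real.norm_of_nonneg (mul_nonneg (Pker_nonneg hs zero_le_one x) (by positivity))]
    exact Pker_one_mul_norm_rpow_le hs ha₀ x
  exact ((hone.comp_smul (inv_ne_zero hz.ne')).const_mul (z ^ (a - n))).congr
    (.of_forall fun x => (Pker_mul_norm_rpow s a hz x).symm)

lemma integrable_Pker (hs : 0 < s) (hz : 0 < z) : Integrable (Pker n s z) := by
  simpa using integrable_Pker_mul_norm_rpow (n := n) hs.le hz le_rfl (by positivity)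

lemma integral_Pker (n : ℕ) (s : ℝ) (hz : 0 < z) : ∫ x, Pker n s z x = ∫ x, Pker n s 1 x := by
  simpa using integral_Pker_mul_norm_rpow (n := n) s 0 hz

/-- The `z`-derivative of the fractional Poisson kernel, in the factored form that makes the
bound `|∂_z P_z| ≤ (n + 2s) P_z / z` visible. -/
def derivPker (n : ℕ) (s z : ℝ) (x : En n) : ℝ :=
  pns n s * z ^ (2 * s - 1) * (2 * s * ‖x‖ ^ 2 - n * z ^ 2) *
    (‖x‖ ^ 2 + z ^ 2) ^ (-((n : ℝ) + 2 * s) / 2 - 1)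

lemma hasDerivAt_Pker (s : ℝ) (hz : 0 < z) (x : En n) :
    HasDerivAt (fun w => Pker n s w x) (derivPker n s z x) z := by
  have hbase : 0 < ‖x‖ ^ 2 + z ^ 2 := by positivity
  have hsq : HasDerivAt (fun w : ℝ => ‖x‖ ^ 2 + w ^ 2) (2 * z) z := by
    simpa using (hasDerivAt_pow 2 z).const_add (‖x‖ ^ 2)
  have hprod := ((Real.hasDerivAt_rpow_const (p := 2 * s) (Or.inl hz.ne')).const_mul (pns n s)).mul
    (hsq.rpow_const (p := -((n : ℝ) + 2 * s) / 2) (Or.inl hbase.ne'))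
  refine hprod.congr_deriv ?_
  rw [derivPker, Real.rpow_sub hbase, Real.rpow_sub hz, Real.rpow_one, Real.rpow_one]
  field_simp
  ring

lemma continuous_derivPker (s : ℝ) (hz : 0 < z) : Continuous (derivPker n s z) := by
  have hpos (x : En n) : ‖x‖ ^ 2 + z ^ 2 ≠ 0 := by positivity
  exact Continuous.mul (by fun_prop)
    (Continuous.rpow_const (by fun_prop) fun x => Or.inl (hpos x))

lemma norm_derivPker_le (hs : 0 ≤ s) (hz : 0 < z) (x : En n) :
    ‖derivPker n s z x‖ ≤ (n + 2 * s) / z * Pker n s z x := by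
  have hbase : 0 < ‖x‖ ^ 2 + z ^ 2 := by positivity
  have hfactor : derivPker n s z x =
      (2 * s * ‖x‖ ^ 2 - n * z ^ 2) / (‖x‖ ^ 2 + z ^ 2) / z * Pker n s z x := by
    rw [derivPker, Pker, Real.rpow_sub hbase, Real.rpow_sub hz, Real.rpow_one, Real.rpow_one]
    field_simp
  have hquot : |2 * s * ‖x‖ ^ 2 - n * z ^ 2| ≤ (n + 2 * s) * (‖x‖ ^ 2 + z ^ 2) := by
    have : 0 ≤ 2 * s * ‖x‖ ^ 2 := by positivity
    have : 0 ≤ 2 * s * z ^ 2 := by positivity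
    have : 0 ≤ n * z ^ 2 := by positivity
    have : 0 ≤ n * ‖x‖ ^ 2 := by positivity
    rw [abs_le]
    constructor <;> linarith
  have hP := Pker_nonneg hs hz.le x
  rw [hfactor, norm_mul, norm_div, norm_div, Real.norm_of_nonneg hP, Real.norm_of_nonneg hz.le,
    Real.norm_of_nonneg hbase.le, Real.norm_eq_abs]
  gcongr
  exact (div_le_iff₀ hbase).2 hquot

lemma integrable_derivPker (hs : 0 < s) (hz : 0 < z) : Integrable (derivPker n s z) :=
  ((integrable_Pker hs hz).const_mul _).mono' (continuous_derivPker s hz).aestronglyMeasurable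
    (.of_forall (norm_derivPker_le hs.le hz))

lemma lintegral_enorm_derivPker_mul_enorm_rpow_le (hs : 0 ≤ s) (hz : 0 < z) {a : ℝ} (ha₀ : 0 ≤ a)
    (ha : a < 2 * s) :
    ∫⁻ t, ‖derivPker n s z t‖ₑ * ‖t‖ₑ ^ a ≤
      ENNReal.ofReal ((n + 2 * s) * ∫ t : En n, Pker n s 1 t * ‖t‖ ^ a) *
        ENNReal.ofReal (z ^ (a - 1)) := by
  have hP (t : En n) : 0 ≤ Pker n s z t * ‖t‖ ^ a :=
    mul_nonneg (Pker_nonneg hs hz.le t) (by positivity)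
  have hc : 0 ≤ (n + 2 * s) / z := by positivity
  calc ∫⁻ t, ‖derivPker n s z t‖ₑ * ‖t‖ₑ ^ a
    _ ≤ ∫⁻ t : En n, ENNReal.ofReal ((n + 2 * s) / z * (Pker n s z t * ‖t‖ ^ a)) := by
      refine lintegral_mono fun t => ?_
      rw [← ofReal_norm, ← ofReal_norm, ENNReal.ofReal_rpow_of_nonneg (norm_nonneg t) ha₀,
        ← ENNReal.ofReal_mul (norm_nonneg _), ← mul_assoc]
      gcongr
      exact norm_derivPker_le hs hz t
    _ = ENNReal.ofReal ((n + 2 * s) / z * (z ^ a * ∫ t : En n, Pker n s 1 t * ‖t‖ ^ a)) := by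
      rw [← ofReal_integral_eq_lintegral_ofReal
          ((integrable_Pker_mul_norm_rpow hs hz ha₀ ha).const_mul _)
          (.of_forall fun t => mul_nonneg hc (hP t)),
        integral_const_mul, integral_Pker_mul_norm_rpow s a hz]
    _ = _ := by
      rw [← ENNReal.ofReal_mul' (by positivity), Real.rpow_sub_one hz.ne']
      ring_nf

lemma norm_derivPker_le_of_mem_Icc (hs : 0 ≤ s) {z₀ z₁ : ℝ} (hz₀ : 0 < z₀)
    (hz : z ∈ Icc z₀ z₁) (x : En n) :
    ‖derivPker n s z x‖ ≤ (n + 2 * s) / z₀ * ((z₁ / z₀) ^ (2 * s) * Pker n s z₀ x) := by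
  obtain ⟨h₀, h₁⟩ := hz
  have hzpos : 0 < z := hz₀.trans_le h₀
  have hP := Pker_nonneg hs hzpos.le x
  have hP₀ := Pker_nonneg hs hz₀.le x
  calc ‖derivPker n s z x‖
    _ ≤ (n + 2 * s) / z * Pker n s z x := norm_derivPker_le hs hzpos x
    _ ≤ (n + 2 * s) / z₀ * ((z / z₀) ^ (2 * s) * Pker n s z₀ x) := by
      gcongr
      exact Pker_le_rpow_mul_Pker hs hz₀ h₀ x
    _ ≤ (n + 2 * s) / z₀ * ((z₁ / z₀) ^ (2 * s) * Pker n s z₀ x) := by gcongr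

lemma hasDerivAt_Pconv (hs : 0 < s) (hz : 0 < z) {g : En n → ℝ} (hg : AEStronglyMeasurable g)
    {A : ℝ} (hA : ∀ y, ‖g y‖ ≤ A) (x : En n) :
    HasDerivAt (fun w => Pconv n s w g x) (∫ y, derivPker n s z (x - y) * g y) z := by
  have hmeas {K : En n → ℝ} (hK : Continuous K) :
      AEStronglyMeasurable fun y => K (x - y) * g y :=
    (hK.comp (continuous_const.sub continuous_id)).aestronglyMeasurable.mul hg
  have hz₂ : 0 < z / 2 := half_pos hz
  have hbound (y : En n) (w : ℝ) (hw : w ∈ Ioo (z / 2) (2 * z)) : ‖derivPker n s w (x - y) * g y‖ ≤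
      (n + 2 * s) / (z / 2) * ((2 * z / (z / 2)) ^ (2 * s) * Pker n s (z / 2) (x - y)) * A := by
    have hK := norm_derivPker_le_of_mem_Icc hs.le hz₂ (Ioo_subset_Icc_self hw) (x - y)
    rw [norm_mul]
    exact mul_le_mul hK (hA y) (norm_nonneg _) ((norm_nonneg _).trans hK)
  refine (hasDerivAt_integral_of_dominated_loc_of_deriv_le
    (Ioo_mem_nhds (by linarith) (by linarith)) ?_ ?_ (hmeas (continuous_derivPker s hz))
    (.of_forall hbound)
    ((((integrable_Pker hs hz₂).comp_sub_left x).const_mul _).const_mul _ |>.mul_const A)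
    (.of_forall fun y w hw =>
      (hasDerivAt_Pker s (hz₂.trans hw.1) (x - y)).mul_const (g y))).2
  · filter_upwards [lt_mem_nhds hz] with w hw using hmeas (continuous_Pker s hw)
  · exact ((integrable_Pker hs hz).comp_sub_left x).mul_bdd hg (.of_forall hA)

/-- `∂_z P_z` has mean zero because the mass of `P_z` is constant in `z`. -/
lemma integral_derivPker_eq_zero (hs : 0 < s) (hz : 0 < z) : ∫ x, derivPker n s z x = 0 := by
  have hderiv := hasDerivAt_Pconv hs hz (g := fun _ : En n => (1 : ℝ)) (A := 1)
    aestronglyMeasurable_const (by simp) 0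
  simp only [Pconv, mul_one, integral_sub_left_eq_self (Pker n s _),
    integral_sub_left_eq_self (derivPker n s z)] at hderiv
  have hmass : (fun w => ∫ x, Pker n s w x) =ᶠ[𝓝 z] fun _ => ∫ x, Pker n s 1 x := by
    filter_upwards [lt_mem_nhds hz] with w hw using integral_Pker n s hw
  exact (hderiv.congr_of_eventuallyEq hmass.symm).unique (hasDerivAt_const _ _)

lemma lintegral_enorm_sq_integral_derivPker_mul_sub_le (hs : 0 ≤ s) (hz : 0 < z) {f : En n → ℝ}
    (hf : Continuous f) {C a : ℝ≥0} (hfC : HolderWith C a f) (ha : a < 2 * s) :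
    ∫⁻ x, ‖∫ t, derivPker n s z t * (f (x - t) - f x)‖ₑ ^ 2 ≤
      2 * volume f.support *
        (C * ENNReal.ofReal ((n + 2 * s) * ∫ t : En n, Pker n s 1 t * ‖t‖ ^ (a : ℝ))) ^ 2 *
        ENNReal.ofReal (z ^ (2 * a - 2 : ℝ)) := by
  have hmodulus (x t : En n) : ‖f (x - t) - f x‖ₑ ≤ C * ‖t‖ₑ ^ (a : ℝ) := by
    simpa [edist_eq_enorm_sub] using hfC (x - t) x
  have hpow : ENNReal.ofReal (z ^ (2 * a - 2 : ℝ)) = ENNReal.ofReal (z ^ (a - 1 : ℝ)) ^ 2 := by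
    rw [← ENNReal.ofReal_pow (by positivity), ← Real.rpow_mul_natCast hz.le]
    push_cast
    ring_nf
  refine (lintegral_enorm_sq_integral_smul_sub_le (continuous_derivPker s hz).aemeasurable
    hf.isOpen_support.measurableSet (by fun_prop) hmodulus).trans ?_
  simp_rw [mul_left_comm _ (C : ℝ≥0∞)]
  rw [lintegral_const_mul' _ _ ENNReal.coe_ne_top, hpow, mul_assoc (2 * volume f.support),
    ← mul_pow, mul_assoc (C : ℝ≥0∞)]
  gcongr
  exact lintegral_enorm_derivPker_mul_enorm_rpow_le hs hz a.coe_nonneg ha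

end PoissonKernel

section Extension

variable {n : ℕ} {s z : ℝ} {u : En n → ℝ}

lemma deriv_CSext_eq_convolution (hs : 0 < s) (hz : 0 < z) (hu : Continuous u)
    (huc : HasCompactSupport u) :
    (fun x => deriv (CSext n s u x) z) =
      derivPker n s z ⋆[ContinuousLinearMap.lsmul ℝ ℝ, volume] u := by
  obtain ⟨A, hA⟩ := huc.exists_bound_of_continuous hu
  funext x
  have hderiv : deriv (CSext n s u x) z = ∫ y, derivPker n s z (x - y) * u y :=
    (hasDerivAt_Pconv hs hz hu.aestronglyMeasurable hA x).deriv
  rw [hderiv, convolution, ← integral_sub_left_eq_self _ volume x]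
  simp

lemma pd_deriv_CSext (hs : 0 < s) (hz : 0 < z) (hu : ContDiff ℝ 1 u) (huc : HasCompactSupport u)
    (i : Fin n) (x : En n) :
    pd i (fun y => deriv (CSext n s u y) z) x =
      ∫ t, derivPker n s z t * (pd i u (x - t) - pd i u x) := by
  have hK : Integrable (derivPker n s z) := integrable_derivPker hs hz
  have hpd := continuous_pd hu i
  obtain ⟨A, hA⟩ := (hasCompactSupport_pd huc i).exists_bound_of_continuous hpd
  have hint : Integrable fun t => derivPker n s z t * pd i u (x - t) :=
    hK.mul_bdd (by fun_prop) (.of_forall fun t => hA (x - t))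
  simp_rw [deriv_CSext_eq_convolution hs hz hu.continuous huc, mul_sub]
  rw [pd_convolution hK.locallyIntegrable hu huc, integral_sub hint (hK.mul_const _),
    integral_mul_const, integral_derivPker_eq_zero hs hz, zero_mul, sub_zero]

lemma ofReal_mul_sum_sq {ι : Type*} (t : Finset ι) {c : ℝ} (hc : 0 ≤ c) (v : ι → ℝ) :
    ENNReal.ofReal (c * ∑ i ∈ t, v i ^ 2) = ENNReal.ofReal c * ∑ i ∈ t, ‖v i‖ₑ ^ 2 := by
  rw [ENNReal.ofReal_mul hc, ENNReal.ofReal_sum_of_nonneg fun _ _ => sq_nonneg _]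
  simp_rw [← ofReal_norm, ← ENNReal.ofReal_pow (norm_nonneg _), Real.norm_eq_abs, sq_abs]

lemma exists_lintegral_mixed_energy_le_rpow (hs : 0 < s) (hu : ContDiff ℝ 1 u)
    (huc : HasCompactSupport u) {C a : ℝ≥0} (hC : HolderWith C a (fderiv ℝ u)) (ha : a < 2 * s) :
    ∃ D : ℝ≥0∞, D ≠ ⊤ ∧ ∀ z, 0 < z →
      ∫⁻ x, ENNReal.ofReal
          (z ^ (1 - 2 * s) * ∑ i, (pd i (fun y => deriv (CSext n s u y) z) x) ^ 2) ≤
        D * ENNReal.ofReal (z ^ (2 * a - 2 * s - 1)) := by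
  set D : Fin n → ℝ≥0∞ := fun i => 2 * volume (pd i u).support *
    (C * ENNReal.ofReal ((n + 2 * s) * ∫ t : En n, Pker n s 1 t * ‖t‖ ^ (a : ℝ))) ^ 2
  have hD (i : Fin n) : D i ≠ ⊤ := by
    have hsupp : volume (pd i u).support ≠ ⊤ :=
      measure_ne_top_of_subset (subset_tsupport _)
        (hasCompactSupport_pd huc i).isCompact.measure_ne_top
    finiteness
  refine ⟨∑ i, D i, ENNReal.sum_ne_top.2 fun i _ => hD i, fun z hz => ?_⟩
  have hcomponent (i : Fin n) : ∫⁻ x, ‖pd i (fun y => deriv (CSext n s u y) z) x‖ₑ ^ 2 ≤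
      D i * ENNReal.ofReal (z ^ (2 * a - 2 : ℝ)) := by
    simp_rw [pd_deriv_CSext hs hz hu huc i]
    exact lintegral_enorm_sq_integral_derivPker_mul_sub_le hs.le hz (continuous_pd hu i)
      (holderWith_pd hC i) ha
  have hmeas (i : Fin n) :
      Measurable fun x => ‖pd i (fun y => deriv (CSext n s u y) z) x‖ₑ ^ 2 :=
    (measurable_pd i _).enorm.pow_const 2
  simp_rw [ofReal_mul_sum_sq _ (Real.rpow_nonneg hz.le _)]
  calc ∫⁻ x, ENNReal.ofReal (z ^ (1 - 2 * s)) *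
        ∑ i, ‖pd i (fun y => deriv (CSext n s u y) z) x‖ₑ ^ 2
    _ = ENNReal.ofReal (z ^ (1 - 2 * s)) *
          ∑ i, ∫⁻ x, ‖pd i (fun y => deriv (CSext n s u y) z) x‖ₑ ^ 2 := by
      rw [lintegral_const_mul' _ _ ENNReal.ofReal_ne_top, lintegral_finsetSum _ fun i _ => hmeas i]
    _ ≤ ENNReal.ofReal (z ^ (1 - 2 * s)) * ∑ i, D i * ENNReal.ofReal (z ^ (2 * a - 2 : ℝ)) := by
      gcongr with i
      exact hcomponent i
    _ = (∑ i, D i) * ENNReal.ofReal (z ^ (2 * a - 2 * s - 1)) := by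
      rw [← Finset.sum_mul, mul_left_comm, ← ENNReal.ofReal_mul (by positivity),
        ← Real.rpow_add hz]
      ring_nf

end Extension

theorem mixed_energy_finite_general {n : ℕ} {s : ℝ} (hs : 0 < s) {u : En n → ℝ}
    (hu : ContDiff ℝ 1 u) (huc : HasCompactSupport u) {C a : ℝ≥0}
    (hC : HolderWith C a (fderiv ℝ u)) (ha : s < a) :
    ∫⁻ p in (univ : Set (En n)) ×ˢ Ioi (0 : ℝ),
      ENNReal.ofReal
        (p.2 ^ (1 - 2 * s) *
          ∑ i, (pd i (fun y => deriv (CSext n s u y) p.2) p.1) ^ 2) < ⊤ := by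
  obtain ⟨A, hA⟩ := (huc.fderiv ℝ).exists_bound_of_continuous (hu.continuous_fderiv one_ne_zero)
  obtain ⟨b, hsb, hb⟩ := exists_between (lt_min ha (by linarith : s < 2 * s))
  lift b to ℝ≥0 using hs.le.trans hsb.le
  have hba : b ≤ a := by exact_mod_cast (hb.trans_le (min_le_left _ _)).le
  obtain ⟨C₀, hC₀⟩ := exists_holderWith_of_le_of_bounded hC hA zero_le
  obtain ⟨C₁, hC₁⟩ := exists_holderWith_of_le_of_bounded hC hA hba
  obtain ⟨D₀, hD₀, hlarge⟩ :=
    exists_lintegral_mixed_energy_le_rpow hs hu huc hC₀ (by simpa using hs)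
  obtain ⟨D₁, hD₁, hsmall⟩ :=
    exists_lintegral_mixed_energy_le_rpow hs hu huc hC₁ (hb.trans_le (min_le_right _ _))
  rw [Measure.volume_eq_prod, ← Measure.prod_restrict, Measure.restrict_univ, ← lintegral_prod_swap]
  refine (lintegral_prod_le _).trans_lt ?_
  exact setLIntegral_Ioi_lt_top_of_le_rpow hD₁ hD₀ (by linarith)
    (by rw [NNReal.coe_zero]; linarith) (fun z hz => hsmall z hz.1)
    (fun z hz => hlarge z (one_pos.trans hz))

/-- **Finiteness of the weighted mixed-derivative energy** (Appendix Lemma, Euclidean case):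
for `u ∈ C_c^∞(ℝⁿ)` with CS extension `U`,
`∫₀^∞ ∫ z^{1-2s} |∇_x ∂_z U|² dx dz < ∞`. -/
theorem mixed_energy_finite (n : ℕ) (hn : 1 ≤ n) (s : ℝ) (hs0 : 0 < s) (hs1 : s < 1)
    (u : En n → ℝ) (hu : ContDiff ℝ (⊤ : ℕ∞) u) (huc : HasCompactSupport u) :
    ∫⁻ p in (univ : Set (En n)) ×ˢ Ioi (0 : ℝ),
      ENNReal.ofReal
        (p.2 ^ (1 - 2 * s) *
          ∑ i, (pd i (fun y => deriv (CSext n s u y) p.2) p.1) ^ 2) < ⊤ := by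
  have hfderiv : ContDiff ℝ 1 (fderiv ℝ u) :=
    ((contDiff_infty.1 hu) 2).fderiv_right (by norm_num)
  obtain ⟨C, hC⟩ := hfderiv.lipschitzWith_of_hasCompactSupport (huc.fderiv ℝ) one_ne_zero
  exact mixed_energy_finite_general hs0 (hu.of_le (by exact_mod_cast le_top)) huc
    (holderWith_one.2 hC) (by simpa using hs1)
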